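/- Fix δ₀, ρ₀ ∈ (0,1), set α₀ = (1−ρ₀)(1−δ₀)²/ρ₀ and β₀ = (1−ρ₀)(1−δ₀)/ρ₀, and for n ≥ 3 define t_n = δ₀√(2(1−ρ₀)log n), c_n = √(2(1−ρ₀)log(n)/ρ₀) · (1 − δ₀ − (1/4)·log log n / log n), and ψ_n(s) = φ(s) · Φ((t_n − √ρ₀ s)/√(1−ρ₀))^n. Then there is a constant c > 0 depending only on (δ₀, ρ₀) such that for all sufficiently large n, ∫_{−∞}^{−c_n} ψ_n(s) ds ≥ c · n^{−α₀} · (log n)^{(β₀−1)/2}. -/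

import Mathlib

open MeasureTheory Real Filter

/-- The standard normal density `φ`. -/
noncomputable def stdNormalPDF (s : ℝ) : ℝ :=
  (Real.sqrt (2 * Real.pi))⁻¹ * Real.exp (-s ^ 2 / 2)

/-- The standard normal distribution function `Φ`. -/
noncomputable def stdNormalCDF (x : ℝ) : ℝ :=
  ∫ s in Set.Iic x, stdNormalPDF s

/-- `t_n = δ₀ √(2(1−ρ₀) log n)`. -/
noncomputable def tN (δ₀ ρ₀ : ℝ) (n : ℕ) : ℝ :=
  δ₀ * Real.sqrt (2 * (1 - ρ₀) * Real.log n)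

/-- `c_n = √(2(1−ρ₀)log(n)/ρ₀) · (1 − δ₀ − (1/4)·log log n / log n)`. -/
noncomputable def cN (δ₀ ρ₀ : ℝ) (n : ℕ) : ℝ :=
  Real.sqrt (2 * (1 - ρ₀) * Real.log n / ρ₀) *
    (1 - δ₀ - (1 / 4) * Real.log (Real.log n) / Real.log n)

/-- `ψ_n(s) = φ(s) · Φ((t_n − √ρ₀ s)/√(1−ρ₀))^n`. -/
noncomputable def psiN (δ₀ ρ₀ : ℝ) (n : ℕ) (s : ℝ) : ℝ :=
  stdNormalPDF s *
    stdNormalCDF ((tN δ₀ ρ₀ n - Real.sqrt ρ₀ * s) / Real.sqrt (1 - ρ₀)) ^ n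

/-!
Left of `-c_n` the argument of `Φ` in `ψ_n` is at least `√(2 log n) (1 - log log n / (4 log n))`,
where the Mills ratio makes the upper tail at most `1 / (2n)`. Bernoulli's inequality then
gives `Φ(⋯)ⁿ ≥ 1/2`, so the integral is at least `Φ(-c_n) / 2`. Finally `Φ(-c_n)` is bounded below
by the mass of the window of width `w = 1 / √(log n)` to the left of `-c_n`. On that window `s² / 2`
exceeds `c_n² / 2` by at most `|c_n| w + w² / 2 = O(1)`, and `c_n² / 2` expands to
`α₀ log n - (β₀ / 2) log log n + O(1)`.
-/

section StdNormal

lemma stdNormalPDF_eq_gaussianPDFReal :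
    stdNormalPDF = ProbabilityTheory.gaussianPDFReal 0 1 := by
  funext s
  simp [stdNormalPDF, ProbabilityTheory.gaussianPDFReal]

lemma integrable_stdNormalPDF : Integrable stdNormalPDF := by
  rw [stdNormalPDF_eq_gaussianPDFReal]
  exact ProbabilityTheory.integrable_gaussianPDFReal 0 1

lemma integral_stdNormalPDF_eq_one : ∫ s, stdNormalPDF s = 1 := by
  rw [stdNormalPDF_eq_gaussianPDFReal]
  exact ProbabilityTheory.integral_gaussianPDFReal_eq_one 0 one_ne_zero

lemma stdNormalPDF_nonneg (s : ℝ) : 0 ≤ stdNormalPDF s := by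
  unfold stdNormalPDF
  positivity

lemma stdNormalPDF_le_of_abs_le_abs {x y : ℝ} (h : |x| ≤ |y|) :
    stdNormalPDF y ≤ stdNormalPDF x := by
  have := sq_le_sq.2 h
  unfold stdNormalPDF
  gcongr

lemma stdNormalPDF_le_half_exp (s : ℝ) : stdNormalPDF s ≤ 1 / 2 * exp (-s ^ 2 / 2) := by
  have two_le_sqrt : 2 ≤ √(2 * π) := le_sqrt_of_sq_le (by linarith [pi_gt_three])
  rw [stdNormalPDF, one_div]
  gcongr

lemma stdNormalCDF_eq_cdf :
    stdNormalCDF = ProbabilityTheory.cdf (ProbabilityTheory.gaussianReal 0 1) := by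
  funext x
  rw [ProbabilityTheory.cdf_eq_real, measureReal_def,
    ProbabilityTheory.gaussianReal_apply_eq_integral 0 one_ne_zero,
    ← stdNormalPDF_eq_gaussianPDFReal,
    ENNReal.toReal_ofReal (integral_nonneg stdNormalPDF_nonneg), stdNormalCDF]

lemma stdNormalCDF_nonneg (x : ℝ) : 0 ≤ stdNormalCDF x := by
  rw [stdNormalCDF_eq_cdf]
  exact ProbabilityTheory.cdf_nonneg _ x

lemma stdNormalCDF_le_one (x : ℝ) : stdNormalCDF x ≤ 1 := by
  rw [stdNormalCDF_eq_cdf]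
  exact ProbabilityTheory.cdf_le_one _ x

lemma monotone_stdNormalCDF : Monotone stdNormalCDF := by
  rw [stdNormalCDF_eq_cdf]
  exact ProbabilityTheory.monotone_cdf _

lemma one_sub_stdNormalCDF_eq_integral_Ioi (x : ℝ) :
    1 - stdNormalCDF x = ∫ s in Set.Ioi x, stdNormalPDF s := by
  rw [← integral_stdNormalPDF_eq_one,
    ← integral_add_compl (measurableSet_Iic (a := x)) integrable_stdNormalPDF, Set.compl_Iic,
    stdNormalCDF, add_sub_cancel_left]

-- `log φ` is concave, hence lies below its tangent at `u`.
lemma stdNormalPDF_le_tangent_exp (s u : ℝ) :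
    stdNormalPDF s ≤ stdNormalPDF u * exp (u ^ 2) * exp (-u * s) := by
  simp only [stdNormalPDF, mul_assoc, ← exp_add]
  gcongr
  linarith [sq_nonneg (s - u)]

lemma one_sub_stdNormalCDF_le_div {u : ℝ} (hu : 0 < u) :
    1 - stdNormalCDF u ≤ stdNormalPDF u / u := by
  have neg_u : -u < 0 := neg_lt_zero.2 hu
  calc 1 - stdNormalCDF u
      = ∫ s in Set.Ioi u, stdNormalPDF s := one_sub_stdNormalCDF_eq_integral_Ioi u
    _ ≤ ∫ s in Set.Ioi u, stdNormalPDF u * exp (u ^ 2) * exp (-u * s) :=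
        setIntegral_mono integrable_stdNormalPDF.integrableOn
          ((integrableOn_exp_mul_Ioi neg_u u).const_mul _)
          fun s => stdNormalPDF_le_tangent_exp s u
    _ = stdNormalPDF u / u * (exp (u ^ 2) * exp (-u * u)) := by
        rw [integral_const_mul, integral_exp_mul_Ioi neg_u]
        ring
    _ = stdNormalPDF u / u := by
        rw [← exp_add, show u ^ 2 + -u * u = 0 by ring, exp_zero, mul_one]

lemma mul_stdNormalPDF_abs_add_le_stdNormalCDF (x : ℝ) {w : ℝ} (hw : 0 ≤ w) :
    w * stdNormalPDF (|x| + w) ≤ stdNormalCDF x := by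
  have pdf_ge : ∀ s ∈ Set.Icc (x - w) x, stdNormalPDF (|x| + w) ≤ stdNormalPDF s := by
    intro s hs
    apply stdNormalPDF_le_of_abs_le_abs
    rw [abs_of_nonneg (by positivity : 0 ≤ |x| + w), abs_le]
    constructor <;> linarith [hs.1, hs.2, neg_abs_le x, le_abs_self x]
  calc w * stdNormalPDF (|x| + w)
      = volume.real (Set.Icc (x - w) x) • stdNormalPDF (|x| + w) := by
        rw [volume_real_Icc_of_le (by linarith), sub_sub_cancel, smul_eq_mul]
    _ ≤ ∫ s in Set.Icc (x - w) x, stdNormalPDF s :=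
        setIntegral_ge_of_const_le measurableSet_Icc measure_Icc_lt_top.ne pdf_ge
          integrable_stdNormalPDF.integrableOn
    _ ≤ stdNormalCDF x :=
        setIntegral_mono_set integrable_stdNormalPDF.integrableOn
          (Eventually.of_forall stdNormalPDF_nonneg) Set.Icc_subset_Iic_self.eventuallyLE

end StdNormal

section Logarithm

lemma sq_log_le_self {x : ℝ} (hx : 1 ≤ x) : log x ^ 2 ≤ x := by
  have sqrt_x_pos : 0 < √x := sqrt_pos.2 (by linarith)
  have log_half_sqrt : log (√x / 2) = log x / 2 - log 2 := by
    rw [log_div sqrt_x_pos.ne' two_ne_zero, log_sqrt (by linarith)]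
  have log_le_sqrt : log x ≤ √x := by
    linarith [log_le_sub_one_of_pos (half_pos sqrt_x_pos), log_two_lt_d9]
  calc log x ^ 2 ≤ √x ^ 2 := pow_le_pow_left₀ (log_nonneg hx) log_le_sqrt 2
    _ = x := sq_sqrt (by linarith)

lemma log_div_self_le_one {x : ℝ} (hx : 0 < x) : log x / x ≤ 1 :=
  (div_le_one hx).2 (by linarith [log_le_sub_one_of_pos hx])

lemma one_le_log_natCast {n : ℕ} (hn : 3 ≤ n) : 1 ≤ log n := by
  have three_le : (3 : ℝ) ≤ n := by exact_mod_cast hn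
  rw [le_log_iff_exp_le (by linarith)]
  exact exp_one_lt_three.le.trans three_le

lemma rpow_neg_mul_log_rpow_eq_exp {x : ℝ} (hx : 1 < x) (a b : ℝ) :
    x ^ (-a) * log x ^ b = exp (-(a * log x - b * log (log x))) := by
  rw [rpow_def_of_pos (by linarith), rpow_def_of_pos (log_pos hx), ← exp_add]
  ring_nf

end Logarithm

section Quantile

/-- An approximation to the standard normal quantile of order `1 - e⁻ᴸ`, made of the first two
terms `√(2L) - log L / (2 √(2L))` of its expansion as `L → ∞`. It is meant for `L = log n`, the
scale of the maximum of `n` independent standard normal variables. -/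
noncomputable def normalQuantileApprox (L : ℝ) : ℝ :=
  √(2 * L) * (1 - 1 / 4 * log L / L)

variable {L : ℝ}

lemma sqrt_le_normalQuantileApprox (hL : 0 < L) : √L ≤ normalQuantileApprox L := by
  have four_thirds_le_sqrt_two : 4 / 3 ≤ √2 := le_sqrt_of_sq_le (by norm_num)
  calc √L = 4 / 3 * √L * (1 - 1 / 4 * 1) := by ring
    _ ≤ √2 * √L * (1 - 1 / 4 * (log L / L)) := by
        gcongr
        exact log_div_self_le_one hL
    _ = normalQuantileApprox L := by
        rw [normalQuantileApprox, sqrt_mul zero_le_two, mul_div_assoc]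

lemma sub_half_log_le_half_sq_normalQuantileApprox (hL : 0 < L) :
    L - log L / 2 ≤ normalQuantileApprox L ^ 2 / 2 := by
  have expansion : normalQuantileApprox L ^ 2 / 2 = L - log L / 2 + log L ^ 2 / (16 * L) := by
    rw [normalQuantileApprox, mul_pow, sq_sqrt (by linarith)]
    field_simp
    ring
  rw [expansion]
  exact le_add_of_nonneg_right (by positivity)

lemma stdNormalPDF_normalQuantileApprox_le (hL : 0 < L) :
    stdNormalPDF (normalQuantileApprox L) ≤ exp (-L) / 2 * √L := by
  calc stdNormalPDF (normalQuantileApprox L)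
      ≤ 1 / 2 * exp (-normalQuantileApprox L ^ 2 / 2) := stdNormalPDF_le_half_exp _
    _ ≤ 1 / 2 * exp (-L + log L / 2) := by
        gcongr
        linarith [sub_half_log_le_half_sq_normalQuantileApprox hL]
    _ = exp (-L) / 2 * √L := by
        rw [exp_add, exp_half, exp_log hL]
        ring

lemma one_sub_stdNormalCDF_normalQuantileApprox_le (hL : 0 < L) :
    1 - stdNormalCDF (normalQuantileApprox L) ≤ exp (-L) / 2 := by
  have quantile_ge := sqrt_le_normalQuantileApprox hL
  have quantile_pos : 0 < normalQuantileApprox L := (sqrt_pos.2 hL).trans_le quantile_ge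
  calc 1 - stdNormalCDF (normalQuantileApprox L)
      ≤ stdNormalPDF (normalQuantileApprox L) / normalQuantileApprox L :=
        one_sub_stdNormalCDF_le_div quantile_pos
    _ ≤ exp (-L) / 2 := by
        rw [div_le_iff₀ quantile_pos]
        exact (stdNormalPDF_normalQuantileApprox_le hL).trans (by gcongr)

end Quantile

section Psi

variable {δ₀ ρ₀ : ℝ} {n : ℕ}

lemma integrable_psiN (δ₀ ρ₀ : ℝ) (n : ℕ) : Integrable (psiN δ₀ ρ₀ n) := by
  have measurable_cdf_pow : Measurable fun s =>
      stdNormalCDF ((tN δ₀ ρ₀ n - √ρ₀ * s) / √(1 - ρ₀)) ^ n :=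
    (monotone_stdNormalCDF.measurable.comp (by fun_prop)).pow_const n
  refine integrable_stdNormalPDF.mul_bdd (c := 1) measurable_cdf_pow.aestronglyMeasurable
    (Eventually.of_forall fun s => ?_)
  rw [norm_of_nonneg (pow_nonneg (stdNormalCDF_nonneg _) n)]
  exact pow_le_one₀ (stdNormalCDF_nonneg _) (stdNormalCDF_le_one _)

lemma cdfArg_neg_cN_eq_normalQuantileApprox (hρ : ρ₀ ∈ Set.Ioo (0 : ℝ) 1) :
    (tN δ₀ ρ₀ n - √ρ₀ * -cN δ₀ ρ₀ n) / √(1 - ρ₀) = normalQuantileApprox (log n) := by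
  have sqrt_rho_ne : √ρ₀ ≠ 0 := (sqrt_pos.2 hρ.1).ne'
  have sqrt_one_sub_ne : √(1 - ρ₀) ≠ 0 := (sqrt_pos.2 (sub_pos.2 hρ.2)).ne'
  have sqrt_split : √(2 * (1 - ρ₀) * log n) = √(1 - ρ₀) * √(2 * log n) := by
    rw [← sqrt_mul (sub_nonneg.2 hρ.2.le)]
    ring_nf
  rw [tN, cN, normalQuantileApprox, sqrt_div' _ hρ.1.le, sqrt_split]
  field_simp
  ring

lemma normalQuantileApprox_le_cdfArg (hρ : ρ₀ ∈ Set.Ioo (0 : ℝ) 1) {s : ℝ}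
    (hs : s ≤ -cN δ₀ ρ₀ n) :
    normalQuantileApprox (log n) ≤ (tN δ₀ ρ₀ n - √ρ₀ * s) / √(1 - ρ₀) := by
  rw [← cdfArg_neg_cN_eq_normalQuantileApprox (δ₀ := δ₀) hρ]
  gcongr

lemma half_le_stdNormalCDF_pow (hn : 1 < n) {x : ℝ} (hx : normalQuantileApprox (log n) ≤ x) :
    1 / 2 ≤ stdNormalCDF x ^ n := by
  have n_pos : (0 : ℝ) < n := by positivity
  have tail_le : 1 - stdNormalCDF x ≤ 1 / (2 * n) := by
    calc 1 - stdNormalCDF x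
        ≤ 1 - stdNormalCDF (normalQuantileApprox (log n)) :=
          sub_le_sub_left (monotone_stdNormalCDF hx) 1
      _ ≤ exp (-log n) / 2 :=
          one_sub_stdNormalCDF_normalQuantileApprox_le (log_pos (by exact_mod_cast hn))
      _ = 1 / (2 * n) := by
          rw [exp_neg, exp_log n_pos]
          field_simp
  calc (1 : ℝ) / 2 = 1 - n * (1 / (2 * n)) := by
        field_simp
        norm_num
    _ ≤ 1 - n * (1 - stdNormalCDF x) := by gcongr
    _ = 1 + n * (stdNormalCDF x - 1) := by ring
    _ ≤ stdNormalCDF x ^ n :=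
        one_add_mul_sub_le_pow (by linarith [stdNormalCDF_nonneg x]) n

lemma half_stdNormalCDF_neg_cN_le_integral_psiN (hρ : ρ₀ ∈ Set.Ioo (0 : ℝ) 1) (hn : 1 < n) :
    1 / 2 * stdNormalCDF (-cN δ₀ ρ₀ n) ≤ ∫ s in Set.Iic (-cN δ₀ ρ₀ n), psiN δ₀ ρ₀ n s := by
  rw [stdNormalCDF, ← integral_const_mul]
  refine setIntegral_mono_on (integrable_stdNormalPDF.const_mul _).integrableOn
    (integrable_psiN δ₀ ρ₀ n).integrableOn measurableSet_Iic fun s hs => ?_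
  rw [psiN, mul_comm]
  exact mul_le_mul_of_nonneg_left
    (half_le_stdNormalCDF_pow hn (normalQuantileApprox_le_cdfArg hρ hs))
    (stdNormalPDF_nonneg s)

end Psi

section Cutoff

variable {δ₀ ρ₀ : ℝ} {n : ℕ}

lemma half_sq_cN_le (hρ : ρ₀ ∈ Set.Ioo (0 : ℝ) 1) (hn : 3 ≤ n) :
    cN δ₀ ρ₀ n ^ 2 / 2 ≤ (1 - ρ₀) * (1 - δ₀) ^ 2 / ρ₀ * log n
      - (1 - ρ₀) * (1 - δ₀) / ρ₀ / 2 * log (log n) + (1 - ρ₀) / (16 * ρ₀) := by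
  have one_le_log := one_le_log_natCast hn
  have log_n_pos : 0 < log n := by linarith
  have rho_pos := hρ.1
  have one_sub_pos := sub_pos.2 hρ.2
  have expansion : cN δ₀ ρ₀ n ^ 2 / 2 = (1 - ρ₀) * (1 - δ₀) ^ 2 / ρ₀ * log n
      - (1 - ρ₀) * (1 - δ₀) / ρ₀ / 2 * log (log n)
      + (1 - ρ₀) / (16 * ρ₀) * (log (log n) ^ 2 / log n) := by
    rw [cN, mul_pow, sq_sqrt (by positivity)]
    field_simp
    ring
  rw [expansion]
  gcongr
  exact mul_le_of_le_one_right (by positivity)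
    ((div_le_one log_n_pos).2 (sq_log_le_self one_le_log))

lemma abs_cN_le (hn : 3 ≤ n) :
    |cN δ₀ ρ₀ n| ≤ √(2 * (1 - ρ₀) / ρ₀) * (|1 - δ₀| + 1 / 4) * √(log n) := by
  have one_le_log := one_le_log_natCast hn
  have ratio_nonneg : 0 ≤ log (log n) / log n :=
    div_nonneg (log_nonneg one_le_log) (by linarith)
  have ratio_le_one : log (log n) / log n ≤ 1 := log_div_self_le_one (by linarith)
  have factor_le : |1 - δ₀ - 1 / 4 * log (log n) / log n| ≤ |1 - δ₀| + 1 / 4 := by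
    refine (abs_sub _ _).trans ?_
    rw [mul_div_assoc, abs_of_nonneg (by positivity : 0 ≤ 1 / 4 * (log (log n) / log n))]
    linarith
  have sqrt_split : √(2 * (1 - ρ₀) * log n / ρ₀) = √(2 * (1 - ρ₀) / ρ₀) * √(log n) := by
    rw [← sqrt_mul' _ (by linarith)]
    ring_nf
  rw [cN, abs_mul, abs_of_nonneg (sqrt_nonneg _), sqrt_split, mul_right_comm]
  gcongr

lemma exists_half_sq_abs_cN_add_le (δ₀ : ℝ) (hρ : ρ₀ ∈ Set.Ioo (0 : ℝ) 1) :
    ∃ B : ℝ, ∀ n : ℕ, 3 ≤ n →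
      (|cN δ₀ ρ₀ n| + 1 / √(log n)) ^ 2 / 2 ≤ (1 - ρ₀) * (1 - δ₀) ^ 2 / ρ₀ * log n
        - (1 - ρ₀) * (1 - δ₀) / ρ₀ / 2 * log (log n) + B := by
  set K := √(2 * (1 - ρ₀) / ρ₀) * (|1 - δ₀| + 1 / 4)
  refine ⟨(1 - ρ₀) / (16 * ρ₀) + K + 1 / 2, fun n hn => ?_⟩
  set w := 1 / √(log n) with hw
  have one_le_sqrt_log : 1 ≤ √(log n) := one_le_sqrt.2 (one_le_log_natCast hn)
  have w_nonneg : 0 ≤ w := by positivity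
  have w_sq_le : w ^ 2 ≤ 1 := pow_le_one₀ w_nonneg ((div_le_one (by linarith)).2 one_le_sqrt_log)
  have cross_le : |cN δ₀ ρ₀ n| * w ≤ K := by
    rw [hw, mul_one_div, div_le_iff₀ (by linarith)]
    exact abs_cN_le hn
  have square_expansion :
      (|cN δ₀ ρ₀ n| + w) ^ 2 / 2 = cN δ₀ ρ₀ n ^ 2 / 2 + |cN δ₀ ρ₀ n| * w + w ^ 2 / 2 := by
    rw [← sq_abs (cN δ₀ ρ₀ n)]
    ring
  linarith [half_sq_cN_le (δ₀ := δ₀) hρ hn]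

lemma exists_le_stdNormalCDF_neg_cN (δ₀ : ℝ) (hρ : ρ₀ ∈ Set.Ioo (0 : ℝ) 1) :
    ∃ c : ℝ, 0 < c ∧ ∀ n : ℕ, 3 ≤ n →
      c * (n : ℝ) ^ (-((1 - ρ₀) * (1 - δ₀) ^ 2 / ρ₀))
          * log n ^ (((1 - ρ₀) * (1 - δ₀) / ρ₀ - 1) / 2)
        ≤ stdNormalCDF (-cN δ₀ ρ₀ n) := by
  obtain ⟨B, hB⟩ := exists_half_sq_abs_cN_add_le δ₀ hρ
  refine ⟨(√(2 * π))⁻¹ * exp (-B), by positivity, fun n hn => ?_⟩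
  have window_exponent_le := hB n hn
  set α := (1 - ρ₀) * (1 - δ₀) ^ 2 / ρ₀
  set β := (1 - ρ₀) * (1 - δ₀) / ρ₀
  have one_lt_n : (1 : ℝ) < n := by exact_mod_cast (by omega : 1 < n)
  have log_n_pos : 0 < log n := log_pos one_lt_n
  have rpow_split : log n ^ ((β - 1) / 2) = 1 / √(log n) * log n ^ (β / 2) := by
    rw [sub_div, rpow_sub log_n_pos, ← sqrt_eq_rpow]
    ring
  calc (√(2 * π))⁻¹ * exp (-B) * (n : ℝ) ^ (-α) * log n ^ ((β - 1) / 2)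
      = 1 / √(log n) * ((√(2 * π))⁻¹ * (exp (-B) * ((n : ℝ) ^ (-α) * log n ^ (β / 2)))) := by
        rw [rpow_split]
        ring
    _ = 1 / √(log n) *
          ((√(2 * π))⁻¹ * exp (-B + -(α * log n - β / 2 * log (log n)))) := by
        rw [rpow_neg_mul_log_rpow_eq_exp one_lt_n, exp_add]
    _ ≤ 1 / √(log n) * stdNormalPDF (|cN δ₀ ρ₀ n| + 1 / √(log n)) := by
        unfold stdNormalPDF
        gcongr
        linarith
    _ ≤ stdNormalCDF (-cN δ₀ ρ₀ n) := by
        rw [← abs_neg (cN δ₀ ρ₀ n)]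
        exact mul_stdNormalPDF_abs_add_le_stdNormalCDF _ (by positivity)

end Cutoff

theorem psi_integral_far_left_tail_lower_bound_general (δ₀ ρ₀ : ℝ)
    (hρ : ρ₀ ∈ Set.Ioo (0 : ℝ) 1) :
    ∃ c : ℝ, 0 < c ∧ ∀ n : ℕ, 3 ≤ n →
      c * (n : ℝ) ^ (-((1 - ρ₀) * (1 - δ₀) ^ 2 / ρ₀))
          * log n ^ (((1 - ρ₀) * (1 - δ₀) / ρ₀ - 1) / 2)
        ≤ ∫ s in Set.Iic (-(cN δ₀ ρ₀ n)), psiN δ₀ ρ₀ n s := by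
  obtain ⟨c, c_pos, le_cdf⟩ := exists_le_stdNormalCDF_neg_cN δ₀ hρ
  refine ⟨1 / 2 * c, by positivity, fun n hn => ?_⟩
  refine le_trans ?_ (half_stdNormalCDF_neg_cN_le_integral_psiN hρ (by omega : 1 < n))
  simpa only [mul_assoc] using mul_le_mul_of_nonneg_left (le_cdf n hn) one_half_pos.le

theorem psi_integral_far_left_tail_lower_bound (δ₀ ρ₀ : ℝ)
    (hδ : δ₀ ∈ Set.Ioo (0 : ℝ) 1) (hρ : ρ₀ ∈ Set.Ioo (0 : ℝ) 1) :
    ∃ c : ℝ, 0 < c ∧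
      ∀ᶠ n : ℕ in atTop,
        c * (n : ℝ) ^ (-((1 - ρ₀) * (1 - δ₀) ^ 2 / ρ₀))
              * Real.log n ^ (((1 - ρ₀) * (1 - δ₀) / ρ₀ - 1) / 2)
          ≤ ∫ s in Set.Iic (-(cN δ₀ ρ₀ n)), psiN δ₀ ρ₀ n s := by
  obtain ⟨c, c_pos, le_integral⟩ := psi_integral_far_left_tail_lower_bound_general δ₀ ρ₀ hρ
  exact ⟨c, c_pos, (eventually_ge_atTop 3).mono le_integral⟩
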